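/- arXiv:0910.2055 — 2 statements merged into one kernel-verified Lean document; each statement's English description precedes it below -/
import Mathlib

section
/- Let V be a finite-dimensional real inner product space, Υ a lattice in V such that √2·Υ is even and unimodular, M, N a polarization of Υ, and k ≥ 1 an integer. If k is even or N is an even lattice, then L(M,N,k) is an even lattice; if k is odd and N is not even, then L(M,N,k) is an odd lattice (it is integral but contains a vector of odd norm). -/
noncomputable section

open scoped RealInnerProductSpace Pointwise
open Module

variable {V : Type*} [NormedAddCommGroup V] [InnerProductSpace ℝ V]

/-- `L` is a (full) lattice in `V`: a finitely generated `ℤ`-submodule spanning `V` over `ℝ`. -/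
def IsLat (L : Submodule ℤ V) : Prop :=
  L.FG ∧ Submodule.span ℝ (L : Set V) = ⊤

/-- The lattice `L` is integral: all inner products of lattice vectors are integers. -/
def IsIntegralLat (L : Submodule ℤ V) : Prop :=
  ∀ x ∈ L, ∀ y ∈ L, ∃ n : ℤ, ⟪x, y⟫ = (n : ℝ)

/-- The lattice `L` is even: it is integral and all norms are even integers. -/
def IsEvenLat (L : Submodule ℤ V) : Prop :=
  IsIntegralLat L ∧ ∀ x ∈ L, ∃ n : ℤ, ⟪x, x⟫ = 2 * (n : ℝ)

/-- The lattice `L` is unimodular: the Gram matrix of some `ℤ`-basis has determinant 1. -/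
def IsUnimodularLat (L : Submodule ℤ V) : Prop :=
  ∃ (n : ℕ) (b : Basis (Fin n) ℤ L),
    (Matrix.of fun i j : Fin n => ⟪(b i : V), (b j : V)⟫).det = 1

/-- The minimum norm `μ(L)` of a lattice. -/
def minNorm (L : Submodule ℤ V) : ℝ :=
  sInf {r : ℝ | ∃ x ∈ L, x ≠ 0 ∧ ⟪x, x⟫ = r}

/-- `√2·Υ` is an even unimodular lattice: all norms of `Υ` are integers, all doubled inner
products are integers, and the Gram matrix of the form `2⟪·,·⟫` on a `ℤ`-basis of `Υ` has
determinant 1. -/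
def SqrtTwoEvenUnimod (Υ : Submodule ℤ V) : Prop :=
  (∀ x ∈ Υ, ∃ n : ℤ, ⟪x, x⟫ = (n : ℝ)) ∧
  (∀ x ∈ Υ, ∀ y ∈ Υ, ∃ n : ℤ, 2 * ⟪x, y⟫ = (n : ℝ)) ∧
  ∃ (n : ℕ) (b : Basis (Fin n) ℤ Υ),
    (Matrix.of fun i j : Fin n => 2 * ⟪(b i : V), (b j : V)⟫).det = 1

/-- `M, N` is a polarization of `Υ`: a pair of integral sublattices with
`M + N = Υ` and `M ∩ N = 2Υ`. -/
def IsPolarization (Υ M N : Submodule ℤ V) : Prop :=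
  M ≤ Υ ∧ N ≤ Υ ∧ IsIntegralLat M ∧ IsIntegralLat N ∧ M ⊔ N = Υ ∧ M ⊓ N = (2 : ℤ) • Υ

/-- The sublattice `L_M = {(x_1,…,x_k) ∈ M^k : x_1+⋯+x_k ∈ M ∩ N}` of `V^k`. -/
def LsubM (M N : Submodule ℤ V) (k : ℕ) : Submodule ℤ (PiLp 2 fun _ : Fin k => V) where
  carrier := {v | (∀ i, v i ∈ M) ∧ (∑ i, v i) ∈ M ⊓ N}
  add_mem' := fun {a b} ha hb =>
    ⟨fun i => M.add_mem (ha.1 i) (hb.1 i), by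
      have h : (∑ i, (a + b) i) = (∑ i, a i) + ∑ i, b i :=
        (Finset.sum_congr rfl fun i _ => rfl).trans Finset.sum_add_distrib
      rw [h]; exact (M ⊓ N).add_mem ha.2 hb.2⟩
  zero_mem' := ⟨fun _ => M.zero_mem, by
      have h : (∑ i : Fin k, (0 : PiLp 2 fun _ : Fin k => V) i) = 0 :=
        Finset.sum_eq_zero fun _ _ => rfl
      rw [h]; exact (M ⊓ N).zero_mem⟩
  smul_mem' := fun c a ha =>
    ⟨fun i => M.smul_mem c (ha.1 i), by
      have h : (∑ i, (c • a) i) = c • ∑ i, a i := by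
        show (∑ i, c • a i) = c • ∑ i, a i
        exact Finset.smul_sum.symm
      rw [h]; exact (M ⊓ N).smul_mem c ha.2⟩

/-- The diagonal sublattice `L^N = {(y,…,y) : y ∈ N}` of `V^k`. -/
def LsupN (N : Submodule ℤ V) (k : ℕ) : Submodule ℤ (PiLp 2 fun _ : Fin k => V) where
  carrier := {v | ∃ y ∈ N, ∀ i, v i = y}
  add_mem' := fun {a b} ha hb => by
    obtain ⟨ya, hya, ha⟩ := ha
    obtain ⟨yb, hyb, hb⟩ := hb
    exact ⟨ya + yb, N.add_mem hya hyb, fun i => by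
      show a i + b i = ya + yb
      rw [ha i, hb i]⟩
  zero_mem' := ⟨0, N.zero_mem, fun _ => rfl⟩
  smul_mem' := fun c a ha => by
    obtain ⟨y, hy, h⟩ := ha
    exact ⟨c • y, N.smul_mem c hy, fun i => by
      show c • a i = c • y
      rw [h i]⟩

/-- The lattice `L(M,N,k) = L_M + L^N ⊆ V^k`. -/
def LMN (M N : Submodule ℤ V) (k : ℕ) : Submodule ℤ (PiLp 2 fun _ : Fin k => V) :=
  LsubM M N k ⊔ LsupN N k

/-- The Leech polarization setup: `V` is 24-dimensional, `√2·Υ` is even unimodular with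
minimum norm 4, and `M, N` is a polarization of `Υ` by two copies of the Leech lattice. -/
def LeechSetup (Υ M N : Submodule ℤ V) : Prop :=
  Module.finrank ℝ V = 24 ∧ IsLat Υ ∧ SqrtTwoEvenUnimod Υ ∧
  (∀ v ∈ Υ, v ≠ 0 → 4 ≤ 2 * ⟪v, v⟫) ∧
  IsPolarization Υ M N ∧
  IsLat M ∧ IsEvenLat M ∧ IsUnimodularLat M ∧ minNorm M = 4 ∧
  IsLat N ∧ IsEvenLat N ∧ IsUnimodularLat N ∧ minNorm N = 4

/-- `(w,x,y,z) ∈ N × M × M × M` is admissible if `x + y + z ∈ M ∩ N`. -/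
def Admissible (M N : Submodule ℤ V) (w x y z : V) : Prop :=
  w ∈ N ∧ x ∈ M ∧ y ∈ M ∧ z ∈ M ∧ x + y + z ∈ M ⊓ N

/-- An offender is an admissible quadruple all three of whose associated vectors
`w+x, w+y, w+z` have norm 2. -/
def Offender (M N : Submodule ℤ V) (w x y z : V) : Prop :=
  Admissible M N w x y z ∧
  ⟪w + x, w + x⟫ = 2 ∧ ⟪w + y, w + y⟫ = 2 ∧ ⟪w + z, w + z⟫ = 2

/-- A super offender is an offender with `⟪w,w⟫ = 4` whose multiset of norms
`{⟪x,x⟫, ⟪y,y⟫, ⟪z,z⟫}` equals `{6,6,4}`. -/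
def SuperOffender (M N : Submodule ℤ V) (w x y z : V) : Prop :=
  Offender M N w x y z ∧ ⟪w, w⟫ = 4 ∧
  ({⟪x, x⟫, ⟪y, y⟫, ⟪z, z⟫} : Multiset ℝ) = ({6, 6, 4} : Multiset ℝ)

/-!
`L^N` is `N` with its form multiplied by `k`, so it is integral, and it is even exactly when `k` or
`N` is even. In an integral lattice the norm is additive modulo 2, so the norm of `x ∈ L_M` is
congruent to the norm of `∑ xᵢ`; this vector lies in `M ∩ N = 2Υ`, whose norms are divisible by 4,
and hence `L_M` is always even. Finally `⟪x, (y,…,y)⟫ = ⟪∑ xᵢ, y⟫` is an integer, because both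
`∑ xᵢ` and `y` lie in the integral lattice `N`. Thus the parity of `L_M + L^N` is that of `L^N`.
-/

section Parity

open AddCommGroup

theorem exists_eq_two_mul_intCast_iff_modEq_zero {a : ℝ} :
    (∃ n : ℤ, a = 2 * (n : ℝ)) ↔ a ≡ 0 [PMOD 2] := by
  simp only [modEq_zero_iff_eq_zsmul, zsmul_eq_mul, mul_comm]

theorem inner_add_self_modEq_two {x y : V} (h : ∃ n : ℤ, ⟪x, y⟫ = (n : ℝ)) :
    ⟪x + y, x + y⟫ ≡ ⟪x, x⟫ + ⟪y, y⟫ [PMOD 2] := by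
  obtain ⟨n, hn⟩ := h
  refine (modEq_iff_eq_add_zsmul.2 ⟨n, ?_⟩).symm
  rw [real_inner_add_add_self, hn, zsmul_eq_mul]
  ring

namespace IsIntegralLat

variable {L L' : Submodule ℤ V}

theorem inner_sum_self_modEq_two (hL : IsIntegralLat L) {ι : Type*} {s : Finset ι} {x : ι → V}
    (hx : ∀ i ∈ s, x i ∈ L) :
    ⟪∑ i ∈ s, x i, ∑ i ∈ s, x i⟫ ≡ ∑ i ∈ s, ⟪x i, x i⟫ [PMOD 2] := by
  induction s using Finset.cons_induction with
  | empty => simp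
  | cons a s ha ih =>
    rw [Finset.forall_mem_cons] at hx
    rw [Finset.sum_cons, Finset.sum_cons]
    exact (inner_add_self_modEq_two (hL _ hx.1 _ (L.sum_mem hx.2))).trans ((ih hx.2).add_left _)

theorem exists_odd_inner_self (hL : IsIntegralLat L)
    (h : ¬ ∀ x ∈ L, ∃ n : ℤ, ⟪x, x⟫ = 2 * (n : ℝ)) :
    ∃ x ∈ L, ∃ n : ℤ, Odd n ∧ ⟪x, x⟫ = (n : ℝ) := by
  push Not at h
  obtain ⟨x, hx, hne⟩ := h
  obtain ⟨n, hn⟩ := hL x hx x hx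
  refine ⟨x, hx, n, Int.not_even_iff_odd.1 fun heven => ?_, hn⟩
  obtain ⟨m, rfl⟩ := heven.two_dvd
  exact hne m (by rw [hn]; push_cast; rfl)

theorem sup (hL : IsIntegralLat L) (hL' : IsIntegralLat L')
    (hcross : ∀ x ∈ L, ∀ y ∈ L', ∃ n : ℤ, ⟪x, y⟫ = (n : ℝ)) : IsIntegralLat (L ⊔ L') := by
  intro v hv w hw
  obtain ⟨x, hx, y, hy, rfl⟩ := Submodule.mem_sup.1 hv
  obtain ⟨x', hx', y', hy', rfl⟩ := Submodule.mem_sup.1 hw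
  obtain ⟨a, ha⟩ := hL x hx x' hx'
  obtain ⟨b, hb⟩ := hcross x hx y' hy'
  obtain ⟨c, hc⟩ := hcross x' hx' y hy
  obtain ⟨d, hd⟩ := hL' y hy y' hy'
  refine ⟨a + b + (c + d), ?_⟩
  rw [inner_add_left, inner_add_right, inner_add_right, ha, hb, real_inner_comm, hc, hd]
  push_cast
  rfl

end IsIntegralLat

theorem IsEvenLat.sup {L L' : Submodule ℤ V} (hL : IsEvenLat L) (hL' : IsEvenLat L')
    (hcross : ∀ x ∈ L, ∀ y ∈ L', ∃ n : ℤ, ⟪x, y⟫ = (n : ℝ)) : IsEvenLat (L ⊔ L') := by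
  refine ⟨hL.1.sup hL'.1 hcross, fun v hv => ?_⟩
  obtain ⟨x, hx, y, hy, rfl⟩ := Submodule.mem_sup.1 hv
  have hxx := exists_eq_two_mul_intCast_iff_modEq_zero.1 (hL.2 x hx)
  have hyy := exists_eq_two_mul_intCast_iff_modEq_zero.1 (hL'.2 y hy)
  rw [exists_eq_two_mul_intCast_iff_modEq_zero]
  simpa only [add_zero] using (inner_add_self_modEq_two (hcross x hx y hy)).trans (hxx.add hyy)

theorem exists_inner_self_eq_two_mul_of_mem_two_smul {L : Submodule ℤ V}
    (hL : ∀ x ∈ L, ∃ n : ℤ, ⟪x, x⟫ = (n : ℝ)) :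
    ∀ x ∈ (2 : ℤ) • L, ∃ n : ℤ, ⟪x, x⟫ = 2 * (n : ℝ) := by
  intro x hx
  obtain ⟨u, hu, rfl⟩ := (Submodule.mem_smul_pointwise_iff_exists _ _ _).1 hx
  obtain ⟨n, hn⟩ := hL u hu
  refine ⟨2 * n, ?_⟩
  rw [two_smul, real_inner_add_add_self, hn]
  push_cast
  ring

end Parity

section Diagonal

variable {ι : Type*} [Fintype ι]

theorem inner_eq_inner_sum_of_forall_eq (x : PiLp 2 fun _ : ι => V) {w : PiLp 2 fun _ : ι => V}
    {y : V} (hw : ∀ i, w i = y) : ⟪x, w⟫ = ⟪∑ i, x i, y⟫ := by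
  simp only [PiLp.inner_apply, hw, sum_inner]

theorem inner_eq_card_mul_inner_of_forall_eq {v w : PiLp 2 fun _ : ι => V} {x y : V}
    (hv : ∀ i, v i = x) (hw : ∀ i, w i = y) : ⟪v, w⟫ = Fintype.card ι * ⟪x, y⟫ := by
  simp only [PiLp.inner_apply, hv, hw, Finset.sum_const, Finset.card_univ, nsmul_eq_mul]

end Diagonal

section Construction

variable {M N : Submodule ℤ V} {k : ℕ}

theorem IsIntegralLat.lsubM (hM : IsIntegralLat M) : IsIntegralLat (LsubM M N k) := by
  intro x hx y hy
  choose n hn using fun i => hM (x i) (hx.1 i) (y i) (hy.1 i)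
  refine ⟨∑ i, n i, ?_⟩
  rw [PiLp.inner_apply, Int.cast_sum]
  exact Finset.sum_congr rfl fun i _ => hn i

theorem IsIntegralLat.isEvenLat_lsubM (hM : IsIntegralLat M)
    (hMN : ∀ x ∈ M ⊓ N, ∃ n : ℤ, ⟪x, x⟫ = 2 * (n : ℝ)) : IsEvenLat (LsubM M N k) := by
  refine ⟨hM.lsubM, fun x hx => ?_⟩
  rw [exists_eq_two_mul_intCast_iff_modEq_zero, PiLp.inner_apply]
  exact (hM.inner_sum_self_modEq_two fun i _ => hx.1 i).symm.trans
    (exists_eq_two_mul_intCast_iff_modEq_zero.1 (hMN _ hx.2))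

theorem IsIntegralLat.lsupN (hN : IsIntegralLat N) : IsIntegralLat (LsupN N k) := by
  rintro v ⟨x, hx, hv⟩ w ⟨y, hy, hw⟩
  obtain ⟨n, hn⟩ := hN x hx y hy
  refine ⟨k * n, ?_⟩
  rw [inner_eq_card_mul_inner_of_forall_eq hv hw, Fintype.card_fin, hn]
  push_cast
  rfl

theorem IsIntegralLat.isEvenLat_lsupN (hN : IsIntegralLat N)
    (h : Even k ∨ ∀ y ∈ N, ∃ n : ℤ, ⟪y, y⟫ = 2 * (n : ℝ)) : IsEvenLat (LsupN N k) := by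
  refine ⟨hN.lsupN, ?_⟩
  rintro v ⟨y, hy, hv⟩
  rw [inner_eq_card_mul_inner_of_forall_eq hv hv, Fintype.card_fin]
  rcases h with hk | hNeven
  · obtain ⟨m, rfl⟩ := hk.two_dvd
    obtain ⟨n, hn⟩ := hN y hy y hy
    exact ⟨m * n, by rw [hn]; push_cast; ring⟩
  · obtain ⟨n, hn⟩ := hNeven y hy
    exact ⟨k * n, by rw [hn]; push_cast; ring⟩

theorem IsIntegralLat.exists_odd_inner_self_lsupN (hN : IsIntegralLat N) (hk : Odd k)
    (h : ¬ ∀ y ∈ N, ∃ n : ℤ, ⟪y, y⟫ = 2 * (n : ℝ)) :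
    ∃ v ∈ LsupN N k, ∃ n : ℤ, Odd n ∧ ⟪v, v⟫ = (n : ℝ) := by
  obtain ⟨y, hy, n, hodd, hn⟩ := hN.exists_odd_inner_self h
  refine ⟨WithLp.toLp 2 fun _ => y, ⟨y, hy, fun _ => rfl⟩, k * n, hk.natCast.mul hodd, ?_⟩
  rw [inner_eq_card_mul_inner_of_forall_eq (fun _ => rfl) (fun _ => rfl), Fintype.card_fin, hn]
  push_cast
  rfl

theorem IsIntegralLat.exists_inner_eq_intCast_of_mem_lsubM_lsupN (hN : IsIntegralLat N) :
    ∀ x ∈ LsubM M N k, ∀ w ∈ LsupN N k, ∃ n : ℤ, ⟪x, w⟫ = (n : ℝ) := by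
  rintro x hx w ⟨y, hy, hw⟩
  rw [inner_eq_inner_sum_of_forall_eq x hw]
  exact hN _ hx.2.2 y hy

end Construction

theorem statement1_general {M N : Submodule ℤ V} (hM : IsIntegralLat M) (hN : IsIntegralLat N)
    (hMN : ∀ x ∈ M ⊓ N, ∃ n : ℤ, ⟪x, x⟫ = 2 * (n : ℝ)) (k : ℕ) :
    ((Even k ∨ ∀ y ∈ N, ∃ n : ℤ, ⟪y, y⟫ = 2 * (n : ℝ)) → IsEvenLat (LMN M N k)) ∧
    ((Odd k ∧ ¬ (∀ y ∈ N, ∃ n : ℤ, ⟪y, y⟫ = 2 * (n : ℝ))) →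
      IsIntegralLat (LMN M N k) ∧
      ∃ v ∈ LMN M N k, ∃ n : ℤ, Odd n ∧ ⟪v, v⟫ = (n : ℝ)) := by
  have hcross := hN.exists_inner_eq_intCast_of_mem_lsubM_lsupN (M := M) (k := k)
  refine ⟨fun h => (hM.isEvenLat_lsubM hMN).sup (hN.isEvenLat_lsupN h) hcross, ?_⟩
  rintro ⟨hk, hNodd⟩
  obtain ⟨v, hv, hodd⟩ := hN.exists_odd_inner_self_lsupN hk hNodd
  exact ⟨hM.lsubM.sup hN.lsupN hcross, v, Submodule.mem_sup_right hv, hodd⟩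

/-- if `k` is even or `N` is even, `L(M,N,k)` is even; if `k` is odd and `N`
is not even, then `L(M,N,k)` is odd: integral, but containing a vector of odd norm. -/
theorem statement1 (Υ M N : Submodule ℤ V) (hΥlat : IsLat Υ)
    (hΥ : SqrtTwoEvenUnimod Υ) (hpol : IsPolarization Υ M N) (k : ℕ) (hk : 1 ≤ k) :
    ((Even k ∨ ∀ y ∈ N, ∃ n : ℤ, ⟪y, y⟫ = 2 * (n : ℝ)) → IsEvenLat (LMN M N k)) ∧
    ((Odd k ∧ ¬ (∀ y ∈ N, ∃ n : ℤ, ⟪y, y⟫ = 2 * (n : ℝ))) →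
      IsIntegralLat (LMN M N k) ∧
      ∃ v ∈ LMN M N k, ∃ n : ℤ, Odd n ∧ ⟪v, v⟫ = (n : ℝ)) := by
  obtain ⟨-, -, hM, hN, -, hMN⟩ := hpol
  exact statement1_general hM hN (hMN ▸ exists_inner_self_eq_two_mul_of_mem_two_smul hΥ.1) k
end
end

section
/- Let V be a finite-dimensional real inner product space, Υ a lattice in V such that √2·Υ is even and unimodular, M, N a polarization of Υ, and k ≥ 2 an integer. Then μ(L(M,N,k)) ≤ min( k·μ(N), 2·min(μ(M), 2μ(Υ)) ). -/
noncomputable section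

open scoped RealInnerProductSpace Pointwise
open Module

variable {V : Type*} [NormedAddCommGroup V] [InnerProductSpace ℝ V]

/-!
The three bounds come from explicit vectors of `L(M,N,k)`: `(y, …, y)` with `y ∈ N`,
`(x, -x, 0, …, 0)` with `x ∈ M`, and `(2u, 0, …, 0)` with `u ∈ Υ`, whose norms are `k`, `2` and
`4` times those of `y`, `x` and `u`.
-/

section PiLpInner

variable {ι 𝕜 : Type*} [Fintype ι] [RCLike 𝕜]

theorem inner_toLp_const_const {E : Type*} [NormedAddCommGroup E] [InnerProductSpace 𝕜 E]
    (x y : E) :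
    inner 𝕜 (WithLp.toLp 2 fun _ : ι => x) (WithLp.toLp 2 fun _ : ι => y) =
      Fintype.card ι * inner 𝕜 x y := by
  simp only [PiLp.inner_apply, Finset.sum_const, Finset.card_univ, nsmul_eq_mul]

variable [DecidableEq ι] {E : ι → Type*} [∀ i, NormedAddCommGroup (E i)]
  [∀ i, InnerProductSpace 𝕜 (E i)]

theorem inner_piLp_single_left (i : ι) (a : E i) (v : PiLp 2 E) :
    inner 𝕜 (PiLp.single 2 i a) v = inner 𝕜 a (v i) := by
  rw [PiLp.inner_apply, Fintype.sum_eq_single i fun j hj => by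
    rw [PiLp.single_eq_of_ne 2 hj, inner_zero_left], PiLp.single_eq_same]

theorem inner_piLp_single_sub_single_self {i j : ι} (hij : i ≠ j) (x : E i) (y : E j) :
    inner 𝕜 (PiLp.single 2 i x - PiLp.single 2 j y : PiLp 2 E)
      (PiLp.single 2 i x - PiLp.single 2 j y) = inner 𝕜 x x + inner 𝕜 y y := by
  simp only [inner_sub_left, inner_piLp_single_left, PiLp.sub_apply, PiLp.single_eq_same,
    PiLp.single_eq_of_ne _ hij, PiLp.single_eq_of_ne _ hij.symm, sub_zero, zero_sub,
    inner_neg_right, sub_neg_eq_add]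

end PiLpInner

section MinNorm

variable {W : Type*} [NormedAddCommGroup W] [InnerProductSpace ℝ W]

theorem minNorm_bot : minNorm (⊥ : Submodule ℤ V) = 0 := by
  have no_norms : {r : ℝ | ∃ x ∈ (⊥ : Submodule ℤ V), x ≠ 0 ∧ ⟪x, x⟫ = r} = ∅ :=
    Set.eq_empty_of_forall_notMem fun _ ⟨_, hx, hx0, _⟩ => hx0 ((Submodule.mem_bot ℤ).1 hx)
  rw [minNorm, no_norms, Real.sInf_empty]

theorem minNorm_le_inner_self {L : Submodule ℤ V} {x : V} (hx : x ∈ L) (hx0 : x ≠ 0) :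
    minNorm L ≤ ⟪x, x⟫ :=
  csInf_le ⟨0, fun _ ⟨_, _, _, hr⟩ => hr ▸ real_inner_self_nonneg⟩ ⟨x, hx, hx0, rfl⟩

theorem le_minNorm {L : Submodule ℤ V} (hL : L ≠ ⊥) {r : ℝ}
    (h : ∀ x ∈ L, x ≠ 0 → r ≤ ⟪x, x⟫) : r ≤ minNorm L := by
  obtain ⟨x, hx, hx0⟩ := L.exists_mem_ne_zero_of_ne_bot hL
  refine le_csInf ⟨_, x, hx, hx0, rfl⟩ ?_
  rintro _ ⟨y, hy, hy0, rfl⟩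
  exact h y hy hy0

theorem minNorm_le_mul_minNorm {K : Submodule ℤ V} {L : Submodule ℤ W} (hK : K ≠ ⊥) {c : ℝ}
    (hc : 0 < c) (h : ∀ x ∈ K, ∃ y ∈ L, ⟪y, y⟫ = c * ⟪x, x⟫) :
    minNorm L ≤ c * minNorm K := by
  rw [← div_le_iff₀' hc]
  refine le_minNorm hK fun x hx hx0 => ?_
  obtain ⟨y, hy, hyx⟩ := h x hx
  have hy0 : y ≠ 0 := by
    rw [← inner_self_ne_zero (𝕜 := ℝ), hyx]
    exact mul_ne_zero hc.ne' (inner_self_ne_zero.2 hx0)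
  rw [div_le_iff₀' hc, ← hyx]
  exact minNorm_le_inner_self hy hy0

end MinNorm

theorem submodule_smul_ne_bot {R G : Type*} [CommSemiring R] [IsDomain R] [AddCommMonoid G]
    [Module R G] [IsTorsionFree R G] {a : R} (ha : a ≠ 0) {L : Submodule R G} (hL : L ≠ ⊥) :
    a • L ≠ ⊥ := by
  obtain ⟨x, hx, hx0⟩ := L.exists_mem_ne_zero_of_ne_bot hL
  exact (Submodule.ne_bot_iff _).2
    ⟨a • x, Submodule.smul_mem_pointwise_smul x a L hx, smul_ne_zero ha hx0⟩

theorem piLp_single_apply_mem {ι E S : Type*} [DecidableEq ι] [AddCommGroup E] [SetLike S E]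
    [ZeroMemClass S E] (p : ENNReal) {L : S} {x : E} (hx : x ∈ L) (i j : ι) :
    (PiLp.single p i x : PiLp p fun _ : ι => E) j ∈ L := by
  rw [PiLp.single_apply]
  split_ifs
  exacts [hx, zero_mem L]

section MemLMN

variable {E : Type*} [NormedAddCommGroup E] {M N : Submodule ℤ E} {k : ℕ}

theorem LMN_bot_bot : LMN (⊥ : Submodule ℤ E) ⊥ k = ⊥ := by
  have hM : LsubM (⊥ : Submodule ℤ E) ⊥ k = ⊥ :=
    (Submodule.eq_bot_iff _).2 fun _ hv => PiLp.ext fun i => (Submodule.mem_bot ℤ).1 (hv.1 i)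
  have hN : LsupN (⊥ : Submodule ℤ E) k = ⊥ :=
    (Submodule.eq_bot_iff _).2 fun _ ⟨_, hy, hv⟩ =>
      PiLp.ext fun i => (hv i).trans ((Submodule.mem_bot ℤ).1 hy)
  rw [LMN, hM, hN, sup_bot_eq]

theorem const_mem_LMN {y : E} (hy : y ∈ N) : WithLp.toLp 2 (fun _ => y) ∈ LMN M N k :=
  Submodule.mem_sup_right ⟨y, hy, fun _ => rfl⟩

theorem single_mem_LMN {x : E} (hx : x ∈ M ⊓ N) (i : Fin k) : PiLp.single 2 i x ∈ LMN M N k := by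
  refine Submodule.mem_sup_left ⟨piLp_single_apply_mem 2 hx.1 i, ?_⟩
  simpa only [PiLp.single_apply, Finset.sum_ite_eq', Finset.mem_univ, if_true] using hx

theorem single_sub_single_mem_LMN {x : E} (hx : x ∈ M) (i j : Fin k) :
    PiLp.single 2 i x - PiLp.single 2 j x ∈ LMN M N k := by
  refine Submodule.mem_sup_left ⟨fun l => M.sub_mem (piLp_single_apply_mem 2 hx i l)
    (piLp_single_apply_mem 2 hx j l), ?_⟩
  simp only [PiLp.sub_apply, PiLp.single_apply, Finset.sum_sub_distrib, Finset.sum_ite_eq',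
    Finset.mem_univ, if_true, sub_self, zero_mem]

end MemLMN

section MinNormLMN

variable {M N : Submodule ℤ V} {k : ℕ}

theorem minNorm_LMN_le_mul_minNorm_right (hN : N ≠ ⊥) (hk : 0 < k) :
    minNorm (LMN M N k) ≤ k * minNorm N :=
  minNorm_le_mul_minNorm hN (Nat.cast_pos.2 hk) fun y hy =>
    ⟨_, const_mem_LMN hy, by rw [inner_toLp_const_const, Fintype.card_fin]⟩

theorem minNorm_LMN_le_two_mul_minNorm_left (hM : M ≠ ⊥) (hk : 2 ≤ k) :
    minNorm (LMN M N k) ≤ 2 * minNorm M := by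
  have : Nontrivial (Fin k) := Fin.nontrivial_iff_two_le.2 hk
  obtain ⟨i, j, hij⟩ := exists_pair_ne (Fin k)
  exact minNorm_le_mul_minNorm hM two_pos fun x hx =>
    ⟨_, single_sub_single_mem_LMN hx i j, by
      rw [inner_piLp_single_sub_single_self hij, two_mul]⟩

theorem minNorm_LMN_le_four_mul_minNorm {Υ : Submodule ℤ V} (hΥ : Υ ≠ ⊥)
    (hMN : (2 : ℤ) • Υ ≤ M ⊓ N) (hk : 0 < k) : minNorm (LMN M N k) ≤ 4 * minNorm Υ := by
  refine minNorm_le_mul_minNorm hΥ four_pos fun u hu => ?_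
  have two_smul_mem : (2 : ℤ) • u ∈ M ⊓ N := hMN (Submodule.smul_mem_pointwise_smul u 2 Υ hu)
  refine ⟨_, single_mem_LMN two_smul_mem ⟨0, hk⟩, ?_⟩
  rw [inner_piLp_single_left, PiLp.single_eq_same, two_zsmul, inner_add_add_self]
  ring

end MinNormLMN

theorem statement4_general {Υ M N : Submodule ℤ V} (hM : M ≤ Υ) (hN : N ≤ Υ)
    (hMN : (2 : ℤ) • Υ ≤ M ⊓ N) {k : ℕ} (hk : 2 ≤ k) :
    minNorm (LMN M N k) ≤ min ((k : ℝ) * minNorm N) (2 * min (minNorm M) (2 * minNorm Υ)) := by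
  rcases eq_or_ne Υ ⊥ with rfl | hΥ
  · obtain rfl := le_bot_iff.1 hM
    obtain rfl := le_bot_iff.1 hN
    simp [LMN_bot_bot, minNorm_bot]
  have : IsTorsionFree ℤ V := .trans_faithfulSMul ℤ ℝ V
  have hMN_ne : M ⊓ N ≠ ⊥ := ne_bot_of_le_ne_bot (submodule_smul_ne_bot two_ne_zero hΥ) hMN
  have hM_ne : M ≠ ⊥ := ne_bot_of_le_ne_bot hMN_ne inf_le_left
  have hN_ne : N ≠ ⊥ := ne_bot_of_le_ne_bot hMN_ne inf_le_right
  have hk_pos : 0 < k := two_pos.trans_le hk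
  rw [mul_min_of_nonneg _ _ zero_le_two, ← mul_assoc, show (2 * 2 : ℝ) = 4 by norm_num]
  exact le_min (minNorm_LMN_le_mul_minNorm_right hN_ne hk_pos)
    (le_min (minNorm_LMN_le_two_mul_minNorm_left hM_ne hk)
      (minNorm_LMN_le_four_mul_minNorm hΥ hMN hk_pos))

/-- `μ(L(M,N,k)) ≤ min(k·μ(N), 2·min(μ(M), 2μ(Υ)))`. -/
theorem statement4 (Υ M N : Submodule ℤ V) (hΥlat : IsLat Υ)
    (hΥ : SqrtTwoEvenUnimod Υ) (hpol : IsPolarization Υ M N) (k : ℕ) (hk : 2 ≤ k) :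
    minNorm (LMN M N k) ≤ min ((k : ℝ) * minNorm N) (2 * min (minNorm M) (2 * minNorm Υ)) := by
  obtain ⟨hM, hN, -, -, -, hMN⟩ := hpol
  exact statement4_general hM hN hMN.ge hk
end
end
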